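/- Let p > 2. There is a constant C = C(p) such that for every Schwartz function G : ℂ → ℂ and every k ∈ ℂ with k ≠ 0, ‖∂̄⁻¹[e_{−k} G]‖_{L^∞(ℂ)} ≤ C |k|^{−1} ( ‖∂̄G‖_{L^p(ℂ)} + ‖∂̄G‖_{L^{p'}(ℂ)} + ‖G‖_{L^∞(ℂ)} ), where p' = p/(p−1). -/

import Mathlib

open MeasureTheory Complex ComplexConjugate Filter Bornology
open scoped ENNReal Topology SchwartzMap

noncomputable section

/-- `e_k(z) = exp(i(conj k · z + k · conj z)/2)`. -/
def ek (k z : ℂ) : ℂ := Complex.exp (Complex.I * (conj k * z + k * conj z) / 2)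

/-- The solid Cauchy transform `∂̄⁻¹[h](z) = (1/π) ∫ h(w)/(z-w) dA(w)`. -/
def dbarInv (h : ℂ → ℂ) (z : ℂ) : ℂ := (Real.pi : ℂ)⁻¹ * ∫ w : ℂ, h w / (z - w)

/-- The solid Cauchy transform `∂_z⁻¹[h](z) = (1/π) ∫ h(w)/(conj z - conj w) dA(w)`. -/
def dzInv (h : ℂ → ℂ) (z : ℂ) : ℂ := (Real.pi : ℂ)⁻¹ * ∫ w : ℂ, h w / (conj z - conj w)

/-- The operator `S^k_q[F] = ∂̄⁻¹[e_{-k} q ∂_z⁻¹[e_k conj(q) F]]`. -/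
def Sk (k : ℂ) (q F : ℂ → ℂ) : ℂ → ℂ :=
  dbarInv fun z => ek (-k) z * q z * dzInv (fun w => ek k w * conj (q w) * F w) z

/-- The Fourier transform on `ℂ ≅ ℝ²`. -/
def FT (f : ℂ → ℂ) (ξ : ℂ) : ℂ :=
  ∫ z : ℂ, Complex.exp (-(2 * Real.pi * Complex.I) * ((z.re * ξ.re + z.im * ξ.im : ℝ) : ℂ)) * f z

/-- The inverse Fourier transform on `ℂ ≅ ℝ²`. -/
def FTinv (f : ℂ → ℂ) (x : ℂ) : ℂ :=
  ∫ ξ : ℂ, Complex.exp ((2 * Real.pi * Complex.I) * ((x.re * ξ.re + x.im * ξ.im : ℝ) : ℂ)) * f ξ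

/-- `D^s`, the Fourier multiplier with symbol `|ξ|^s`. -/
def Ds (s : ℝ) (f : ℂ → ℂ) : ℂ → ℂ :=
  FTinv fun ξ => ((‖ξ‖ ^ s : ℝ) : ℂ) * FT f ξ

/-- The weighted Sobolev norm
`‖q‖_{H^{s,s}} = max {‖q‖₂, ‖D^s q‖₂, ‖|·|^s q‖₂}`, where by Plancherel
`‖D^s q‖₂ = ‖ |ξ|^s (FT q)(ξ) ‖₂`. -/
def HssNorm (s : ℝ) (q : ℂ → ℂ) : ℝ≥0∞ :=
  max (eLpNorm q 2 volume)
    (max (eLpNorm (fun ξ : ℂ => ((‖ξ‖ ^ s : ℝ) : ℂ) * FT q ξ) 2 volume)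
      (eLpNorm (fun z : ℂ => ((‖z‖ ^ s : ℝ) : ℂ) * q z) 2 volume))

/-- The Cauchy–Riemann operator `∂̄ = (∂/∂z₁ + i ∂/∂z₂)/2`. -/
def dbar (G : ℂ → ℂ) (z : ℂ) : ℂ := (fderiv ℝ G z 1 + Complex.I * fderiv ℝ G z Complex.I) / 2

end

/-!
The derivative `∂̄ e_k = (ik/2) e_k` brings in the factor `|k|⁻¹`: applying the Cauchy–Pompeiu
formula `∂̄⁻¹ ∂̄ H = H` to `H = e_k G` gives
`∂̄⁻¹[e_k G] = (2/(ik)) (e_k G - ∂̄⁻¹[e_k ∂̄G])`. As `|e_k| = 1`, it remains to bound `∂̄⁻¹` from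
`L^p ∩ L^q` to `L^∞` for `q < 2 < p`; this is Hölder's inequality, since the kernel `|w|⁻¹` lies in
`L^{p'}` on the unit disc and in `L^{q'}` outside it.

For Cauchy–Pompeiu, `∂̄H(w)/w = (1/2) (∂_r H + (i/r) ∂_θ H)/r` in polar coordinates `w = r e^{iθ}`.
Against `r dr dθ` the first term integrates to `-π H(0)`, and the second vanishes by periodicity.
-/

section InvNormKernel

open Metric Module

variable {E F : Type*} [NormedAddCommGroup E] [NormedSpace ℝ E] [FiniteDimensional ℝ E]
  [MeasurableSpace E] [BorelSpace E] [NormedAddCommGroup F] [NormedSpace ℝ F]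
  {μ : Measure E} [μ.IsAddHaarMeasure]

theorem integrableOn_ball_norm_rpow_neg {s : ℝ} (hs : s < finrank ℝ E) (h0 : 0 < finrank ℝ E)
    (R : ℝ) : IntegrableOn (fun x : E => ‖x‖ ^ (-s)) (ball 0 R) μ := by
  have := Module.nontrivial_of_finrank_pos h0
  rcases le_or_gt R 0 with hR | hR
  · simp [ball_eq_empty.2 hR]
  rw [integrableOn_fun_norm_addHaar μ (f := fun r : ℝ => r ^ (-s))]
  refine ((intervalIntegral.integrableOn_Ioo_rpow_iff (s := finrank ℝ E - 1 - s) hR).2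
    (by linarith)).congr_fun (fun r hr => ?_) measurableSet_Ioo
  simp only [smul_eq_mul]
  rw [← Real.rpow_natCast, ← Real.rpow_add hr.1, Nat.cast_pred h0, sub_eq_add_neg _ s]

theorem memLp_inv_norm_restrict_ball {s : ℝ≥0∞} (hs : s < finrank ℝ E) :
    MemLp (fun x : E => ‖x‖⁻¹) s (μ.restrict (ball 0 1)) := by
  rcases eq_or_ne s 0 with rfl | hs0
  · exact memLp_zero_iff_aestronglyMeasurable.2 (by fun_prop)
  lift s to NNReal using hs.ne_top
  rw [← integrable_norm_rpow_iff (by fun_prop) hs0 (by simp)]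
  have hs : s < (finrank ℝ E : NNReal) := by exact_mod_cast hs
  simpa [IntegrableOn, Real.rpow_neg, Real.inv_rpow] using integrableOn_ball_norm_rpow_neg (μ := μ)
    (s := s) (by exact_mod_cast hs) (by exact_mod_cast hs.pos) 1

theorem memLp_inv_one_add_norm {s : ℝ≥0∞} (hs : finrank ℝ E < s) :
    MemLp (fun x : E => (1 + ‖x‖)⁻¹) s μ := by
  have hmeas : AEStronglyMeasurable (fun x : E => (1 + ‖x‖)⁻¹) μ := by fun_prop
  rcases eq_or_ne s ⊤ with rfl | hs_top
  · refine memLp_top_of_bound hmeas 1 (.of_forall fun x => ?_)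
    rw [norm_inv, Real.norm_of_nonneg (by positivity)]
    exact inv_le_one_of_one_le₀ (by simp)
  lift s to NNReal using hs_top
  rw [← integrable_norm_rpow_iff hmeas (pos_of_gt hs).ne' (by simp)]
  refine (integrable_one_add_norm (r := s) (by exact_mod_cast hs)).congr (.of_forall fun x => ?_)
  simp only
  rw [norm_inv, Real.norm_of_nonneg (by positivity), ENNReal.coe_toReal,
    Real.inv_rpow (by positivity), Real.rpow_neg (by positivity)]

theorem memLp_inv_norm_restrict_compl_ball {s : ℝ≥0∞} (hs : finrank ℝ E < s) :
    MemLp (fun x : E => ‖x‖⁻¹) s (μ.restrict (ball 0 1)ᶜ) := by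
  refine ((memLp_inv_one_add_norm hs).const_mul 2).restrict _ |>.mono (by fun_prop) ?_
  refine ae_restrict_of_forall_mem measurableSet_ball.compl fun x hx => ?_
  have hx : 1 ≤ ‖x‖ := by simpa using hx
  rw [norm_inv, norm_norm, Real.norm_of_nonneg (by positivity), ← div_eq_mul_inv,
    inv_le_comm₀ (by positivity) (by positivity), inv_div]
  linarith

theorem exists_eLpNorm_inv_norm_smul_le {p p' q q' : ℝ≥0∞} [p'.HolderConjugate p]
    [q'.HolderConjugate q] (hp' : p' < finrank ℝ E) (hq' : finrank ℝ E < q') :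
    ∃ K : NNReal, ∀ g : E → F, AEStronglyMeasurable g μ →
      eLpNorm (fun x => ‖x‖⁻¹ • g x) 1 μ ≤ K * (eLpNorm g p μ + eLpNorm g q μ) := by
  have hnear := memLp_inv_norm_restrict_ball (μ := μ) hp'
  have hfar := memLp_inv_norm_restrict_compl_ball (μ := μ) hq'
  set A := eLpNorm (fun x : E => ‖x‖⁻¹) p' (μ.restrict (ball 0 1))
  set B := eLpNorm (fun x : E => ‖x‖⁻¹) q' (μ.restrict (ball 0 1)ᶜ)
  refine ⟨(max A B).toNNReal, fun g hg => ?_⟩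
  rw [ENNReal.coe_toNNReal (max_lt hnear.2 hfar.2).ne]
  have holder {r r' : ℝ≥0∞} [r'.HolderConjugate r] (s : Set E) :
      ∫⁻ x in s, ‖‖x‖⁻¹ • g x‖ₑ ∂μ ≤
        eLpNorm (fun x : E => ‖x‖⁻¹) r' (μ.restrict s) * eLpNorm g r μ := by
    rw [← eLpNorm_one_eq_lintegral_enorm]
    exact (eLpNorm_smul_le_mul_eLpNorm hg.restrict (by fun_prop)).trans
      (mul_le_mul_right (eLpNorm_restrict_le g r μ s) _)
  calc eLpNorm (fun x => ‖x‖⁻¹ • g x) 1 μ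
      = ∫⁻ x in ball 0 1, ‖‖x‖⁻¹ • g x‖ₑ ∂μ + ∫⁻ x in (ball 0 1)ᶜ, ‖‖x‖⁻¹ • g x‖ₑ ∂μ := by
        rw [eLpNorm_one_eq_lintegral_enorm, lintegral_add_compl _ measurableSet_ball]
    _ ≤ A * eLpNorm g p μ + B * eLpNorm g q μ := add_le_add (holder _) (holder _)
    _ ≤ max A B * eLpNorm g p μ + max A B * eLpNorm g q μ := by
        gcongr
        exacts [le_max_left A B, le_max_right A B]
    _ = max A B * (eLpNorm g p μ + eLpNorm g q μ) := (mul_add _ _ _).symm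

theorem integrable_inv_norm_smul {q q' : ℝ≥0∞} [q'.HolderConjugate q] (hE : 1 < finrank ℝ E)
    (hq' : finrank ℝ E < q') {g : E → F} (hg : Continuous g) (hgq : MemLp g q μ) :
    Integrable (fun x => ‖x‖⁻¹ • g x) μ := by
  have hnear : IntegrableOn (fun x => ‖x‖⁻¹ • g x) (ball 0 1) μ :=
    IntegrableOn.smul_continuousOn_of_subset
      (memLp_one_iff_integrable.1 (memLp_inv_norm_restrict_ball (by exact_mod_cast hE)))
      hg.continuousOn measurableSet_ball (isCompact_closedBall 0 1) ball_subset_closedBall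
  have hfar : IntegrableOn (fun x => ‖x‖⁻¹ • g x) (ball 0 1)ᶜ μ :=
    memLp_one_iff_integrable.1 ((hgq.restrict _).smul (memLp_inv_norm_restrict_compl_ball hq'))
  rw [← integrableOn_univ, ← Set.union_compl_self (ball 0 1)]
  exact hnear.union hfar

end InvNormKernel

section Polar

open Set Real

variable {F : Type*} [NormedAddCommGroup F] [NormedSpace ℝ F]

theorem polarCoord_symm_eq_circleMap (q : ℝ × ℝ) :
    Complex.polarCoord.symm q = circleMap 0 q.1 q.2 := by
  simp [circleMap, Complex.exp_mul_I]

theorem integral_circleMap_polarCoord_target (f : ℂ → F) :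
    ∫ q in polarCoord.target, q.1 • f (circleMap 0 q.1 q.2) = ∫ w, f w := by
  simp only [← polarCoord_symm_eq_circleMap, Complex.integral_comp_polarCoord_symm]

theorem integrableOn_circleMap_polarCoord_target_iff {f : ℂ → F} :
    IntegrableOn (fun q : ℝ × ℝ => q.1 • f (circleMap 0 q.1 q.2)) polarCoord.target ↔
      Integrable f := by
  simp only [← polarCoord_symm_eq_circleMap,
    ← measurableEquivRealProd_symm_polarCoord_symm_apply]
  rw [← volume_preserving_equiv_real_prod.symm.integrable_comp_emb
      measurableEquivRealProd.symm.measurableEmbedding, ← integrableOn_univ,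
    ← integrableOn_congr_set_ae polarCoord_source_ae_eq_univ,
    ← polarCoord.symm_image_target_eq_source,
    integrableOn_image_iff_integrableOn_abs_det_fderiv_smul volume
      polarCoord.open_target.measurableSet
      (fun q _ => (hasFDerivAt_polarCoord_symm q).hasFDerivWithinAt) polarCoord.symm.injOn]
  refine integrableOn_congr_fun (fun q hq => ?_) polarCoord.open_target.measurableSet
  simp only [det_fderivPolarCoordSymm, abs_of_pos (show 0 < q.1 from hq.1), Function.comp_apply]

theorem hasDerivAt_circleMap_radius (c : ℂ) (r θ : ℝ) :
    HasDerivAt (fun r : ℝ => circleMap c r θ) (circleMap 0 1 θ) r := by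
  simpa [circleMap] using ((hasDerivAt_id r).ofReal_comp.mul_const (cexp (θ * I))).const_add c

theorem integral_Ioi_fderiv_circleMap [CompleteSpace F] {H : ℂ → F} (hH : Differentiable ℝ H)
    {θ : ℝ} (h0 : IntegrableOn (fun r => H (circleMap 0 r θ)) (Ioi 0))
    (h1 : IntegrableOn (fun r => fderiv ℝ H (circleMap 0 r θ) (circleMap 0 1 θ)) (Ioi 0)) :
    ∫ r in Ioi (0 : ℝ), fderiv ℝ H (circleMap 0 r θ) (circleMap 0 1 θ) = -H 0 := by
  have hderiv (r : ℝ) : HasDerivAt (fun r => H (circleMap 0 r θ))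
      (fderiv ℝ H (circleMap 0 r θ) (circleMap 0 1 θ)) r :=
    (hH _).hasFDerivAt.comp_hasDerivAt r (hasDerivAt_circleMap_radius 0 r θ)
  simpa using integral_Ioi_of_hasDerivAt_of_tendsto' (fun r _ => hderiv r) h1
    (tendsto_zero_of_hasDerivAt_of_integrableOn_Ioi (fun r _ => hderiv r) h1 h0)

theorem setIntegral_fderiv_circleMap_mul_I [CompleteSpace F] {H : ℂ → F} (hH : ContDiff ℝ 1 H)
    (r : ℝ) :
    ∫ θ in Ioo (-π) π, fderiv ℝ H (circleMap 0 r θ) (circleMap 0 r θ * I) = 0 := by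
  have hderiv (θ : ℝ) : HasDerivAt (fun θ => H (circleMap 0 r θ))
      (fderiv ℝ H (circleMap 0 r θ) (circleMap 0 r θ * I)) θ :=
    (hH.differentiable one_ne_zero _).hasFDerivAt.comp_hasDerivAt θ (hasDerivAt_circleMap 0 r θ)
  have hcont : Continuous fun θ => fderiv ℝ H (circleMap 0 r θ) (circleMap 0 r θ * I) := by
    have := hH.continuous_fderiv one_ne_zero
    fun_prop
  have hperiodic : circleMap 0 r π = circleMap 0 r (-π) := by
    simp [circleMap, Complex.exp_neg, Complex.exp_pi_mul_I]
  rw [← integral_Ioc_eq_integral_Ioo, ← intervalIntegral.integral_of_le (by linarith [pi_pos]),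
    intervalIntegral.integral_eq_sub_of_hasDerivAt (fun θ _ => hderiv θ)
      (hcont.intervalIntegrable _ _), hperiodic, sub_self]

theorem integrable_inv_normSq_smul_clm_apply {L : ℂ → ℂ →L[ℝ] F} (hL : Continuous L)
    (hLint : Integrable fun w => ‖w‖⁻¹ • L w) {v : ℂ → ℂ} (hv : Continuous v)
    (hvnorm : ∀ w, ‖v w‖ = ‖w‖) : Integrable fun w => (‖w‖ ^ 2)⁻¹ • L w (v w) := by
  refine hLint.mono ?_ (.of_forall fun w => ?_)
  · exact (by fun_prop : AEStronglyMeasurable fun w : ℂ => (‖w‖ ^ 2)⁻¹).smul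
      (hL.clm_apply hv).aestronglyMeasurable
  rcases eq_or_ne w 0 with rfl | hw
  · simp
  calc ‖(‖w‖ ^ 2)⁻¹ • L w (v w)‖ = (‖w‖ ^ 2)⁻¹ * ‖L w (v w)‖ := by simp [norm_smul]
    _ ≤ (‖w‖ ^ 2)⁻¹ * (‖L w‖ * ‖w‖) := by
        gcongr
        exact hvnorm w ▸ (L w).le_opNorm (v w)
    _ = ‖‖w‖⁻¹ • L w‖ := by
        rw [norm_smul, norm_inv, norm_norm]
        field_simp

theorem volume_restrict_polarCoord_target :
    (volume : Measure (ℝ × ℝ)).restrict polarCoord.target =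
      (volume.restrict (Ioi 0)).prod (volume.restrict (Ioo (-π) π)) :=
  (Measure.prod_restrict _ _).symm

theorem smul_inv_normSq_smul_map_circleMap (L : ℂ →L[ℝ] F) {r : ℝ} (hr : r ≠ 0) (θ : ℝ) :
    r • (‖circleMap 0 r θ‖ ^ 2)⁻¹ • L (circleMap 0 r θ) = L (circleMap 0 1 θ) := by
  have hscale : circleMap 0 r θ = r • circleMap 0 1 θ := by simp [circleMap]
  rw [norm_circleMap_zero, sq_abs, hscale, map_smul, smul_smul, smul_smul,
    show r * (r ^ 2)⁻¹ * r = 1 by field_simp, one_smul]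

theorem integral_inv_normSq_smul_fderiv_self [CompleteSpace F] {H : ℂ → F} (hH : ContDiff ℝ 1 H)
    (h0 : Integrable fun w => ‖w‖⁻¹ • H w) (h1 : Integrable fun w => ‖w‖⁻¹ • fderiv ℝ H w) :
    ∫ w, (‖w‖ ^ 2)⁻¹ • fderiv ℝ H w w = -((2 * π) • H 0) := by
  set A : ℝ × ℝ → F := fun q => fderiv ℝ H (circleMap 0 q.1 q.2) (circleMap 0 1 q.2)
  have hpolar : EqOn (fun q : ℝ × ℝ => q.1 • (‖circleMap 0 q.1 q.2‖ ^ 2)⁻¹ •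
      fderiv ℝ H (circleMap 0 q.1 q.2) (circleMap 0 q.1 q.2)) A polarCoord.target :=
    fun q hq => smul_inv_normSq_smul_map_circleMap _ (ne_of_gt hq.1) q.2
  have hH0 : IntegrableOn (fun q : ℝ × ℝ => H (circleMap 0 q.1 q.2)) polarCoord.target := by
    refine (integrableOn_circleMap_polarCoord_target_iff.2 h0).congr_fun (fun q hq => ?_)
      polarCoord.open_target.measurableSet
    have hr : 0 < q.1 := hq.1
    simp [abs_of_pos hr, smul_smul, hr.ne']
  have hA : IntegrableOn A polarCoord.target :=
    (integrableOn_circleMap_polarCoord_target_iff.2 <| integrable_inv_normSq_smul_clm_apply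
      (hH.continuous_fderiv one_ne_zero) h1 continuous_id fun _ => rfl).congr_fun hpolar
      polarCoord.open_target.measurableSet
  rw [IntegrableOn, volume_restrict_polarCoord_target] at hH0 hA
  calc ∫ w, (‖w‖ ^ 2)⁻¹ • fderiv ℝ H w w
      = ∫ q in polarCoord.target, A q := by
        rw [← integral_circleMap_polarCoord_target]
        exact setIntegral_congr_fun polarCoord.open_target.measurableSet hpolar
    _ = ∫ θ in Ioo (-π) π, ∫ r in Ioi (0 : ℝ), A (r, θ) := by
        rw [volume_restrict_polarCoord_target, integral_prod_symm _ hA]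
    _ = ∫ _θ in Ioo (-π) π, -H 0 := by
        refine integral_congr_ae ?_
        filter_upwards [hH0.prod_left_ae, hA.prod_left_ae] with θ hθ0 hθ1
        exact integral_Ioi_fderiv_circleMap (hH.differentiable one_ne_zero) hθ0 hθ1
    _ = -((2 * π) • H 0) := by
        rw [setIntegral_const, volume_real_Ioo_of_le (by linarith [pi_pos]), smul_neg]
        ring_nf

theorem integral_inv_normSq_smul_fderiv_mul_I [CompleteSpace F] {H : ℂ → F}
    (hH : ContDiff ℝ 1 H) (h1 : Integrable fun w => ‖w‖⁻¹ • fderiv ℝ H w) :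
    ∫ w, (‖w‖ ^ 2)⁻¹ • fderiv ℝ H w (w * I) = 0 := by
  have hint := integrableOn_circleMap_polarCoord_target_iff.2 <|
    integrable_inv_normSq_smul_clm_apply (hH.continuous_fderiv one_ne_zero) h1
      (v := (· * I)) (by fun_prop) fun w => by simp
  rw [IntegrableOn, volume_restrict_polarCoord_target] at hint
  rw [← integral_circleMap_polarCoord_target, volume_restrict_polarCoord_target,
    integral_prod _ hint]
  simp only [norm_circleMap_zero, integral_smul, setIntegral_fderiv_circleMap_mul_I hH, smul_zero,
    integral_zero]

end Polar

section Dbar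

theorem dbar_mul {f g : ℂ → ℂ} {z : ℂ} (hf : DifferentiableAt ℝ f z)
    (hg : DifferentiableAt ℝ g z) :
    dbar (fun w => f w * g w) z = f z * dbar g z + dbar f z * g z := by
  simp only [dbar, fderiv_fun_mul hf hg, add_apply, smul_apply, smul_eq_mul]
  ring

theorem fderiv_comp_const_sub {E F : Type*} [NormedAddCommGroup E] [NormedSpace ℝ E]
    [NormedAddCommGroup F] [NormedSpace ℝ F] {f : E → F} {a x : E}
    (hf : DifferentiableAt ℝ f (a - x)) :
    fderiv ℝ (fun y => f (a - y)) x = -fderiv ℝ f (a - x) := by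
  have := (hf.hasFDerivAt.comp x ((hasFDerivAt_id x).const_sub a)).fderiv
  rwa [ContinuousLinearMap.comp_neg, ContinuousLinearMap.comp_id] at this

theorem dbar_comp_const_sub {H : ℂ → ℂ} {z w : ℂ} (hH : DifferentiableAt ℝ H (z - w)) :
    dbar (fun w => H (z - w)) w = -dbar H (z - w) := by
  simp only [dbar, fderiv_comp_const_sub hH, neg_apply]
  ring

theorem continuous_dbar {H : ℂ → ℂ} (hH : ContDiff ℝ 1 H) : Continuous (dbar H) := by
  have := hH.continuous_fderiv one_ne_zero
  unfold dbar
  fun_prop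

theorem norm_dbar_le (H : ℂ → ℂ) (z : ℂ) : ‖dbar H z‖ ≤ ‖fderiv ℝ H z‖ := by
  have hone : ‖fderiv ℝ H z 1‖ ≤ ‖fderiv ℝ H z‖ := by
    simpa using (fderiv ℝ H z).le_opNorm 1
  have hI : ‖fderiv ℝ H z I‖ ≤ ‖fderiv ℝ H z‖ := by
    simpa using (fderiv ℝ H z).le_opNorm I
  calc ‖dbar H z‖ = ‖fderiv ℝ H z 1 + I * fderiv ℝ H z I‖ / 2 := by
        rw [dbar, norm_div, norm_ofNat]
    _ ≤ (‖fderiv ℝ H z 1‖ + ‖fderiv ℝ H z I‖) / 2 := by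
        gcongr
        simpa using norm_add_le (fderiv ℝ H z 1) (I * fderiv ℝ H z I)
    _ ≤ ‖fderiv ℝ H z‖ := by linarith

theorem memLp_dbar {q : ℝ≥0∞} {H : ℂ → ℂ} (hH : ContDiff ℝ 1 H)
    (hDHq : MemLp (fderiv ℝ H) q) : MemLp (dbar H) q :=
  hDHq.of_le (continuous_dbar hH).aestronglyMeasurable (.of_forall (norm_dbar_le H))

theorem dbar_div_self (H : ℂ → ℂ) (w : ℂ) :
    dbar H w / w = 2⁻¹ * ((‖w‖ ^ 2)⁻¹ • fderiv ℝ H w w +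
      I * (‖w‖ ^ 2)⁻¹ • fderiv ℝ H w (w * I)) := by
  have hmap (v : ℂ) : fderiv ℝ H w v = v.re * fderiv ℝ H w 1 + v.im * fderiv ℝ H w I := by
    conv_lhs => rw [show v = v.re • (1 : ℂ) + v.im • I by simp [re_add_im]]
    rw [map_add, map_smul, map_smul, real_smul, real_smul]
  have hconj : fderiv ℝ H w w + I * fderiv ℝ H w (w * I) =
      conj w * (fderiv ℝ H w 1 + I * fderiv ℝ H w I) := by
    rw [hmap w, hmap (w * I), show conj w = w.re - w.im * I by apply Complex.ext <;> simp]
    simp only [mul_re, mul_im, I_re, I_im]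
    push_cast
    linear_combination (w.im * fderiv ℝ H w I) * I_sq
  have hinv : w⁻¹ = conj w * ((‖w‖ ^ 2)⁻¹ : ℝ) := by rw [inv_def, normSq_eq_norm_sq]
  rw [dbar, div_eq_mul_inv, hinv, real_smul, real_smul]
  linear_combination (-(2⁻¹ * (((‖w‖ ^ 2)⁻¹ : ℝ) : ℂ))) * hconj

theorem integral_dbar_div_self {H : ℂ → ℂ} (hH : ContDiff ℝ 1 H)
    (h0 : Integrable fun w => ‖w‖⁻¹ • H w) (h1 : Integrable fun w => ‖w‖⁻¹ • fderiv ℝ H w) :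
    ∫ w, dbar H w / w = -(Real.pi * H 0) := by
  have hDH := hH.continuous_fderiv one_ne_zero
  have hradial := integrable_inv_normSq_smul_clm_apply hDH h1 continuous_id fun _ => rfl
  have hangular := integrable_inv_normSq_smul_clm_apply hDH h1 (v := (· * I)) (by fun_prop)
    fun w => by simp
  simp only [dbar_div_self, id_eq] at hradial ⊢
  rw [integral_const_mul, integral_add hradial (hangular.const_mul I), integral_const_mul,
    integral_inv_normSq_smul_fderiv_self hH h0 h1, integral_inv_normSq_smul_fderiv_mul_I hH h1,
    real_smul]
  push_cast
  ring

end Dbar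

section CauchyTransform

theorem two_lt_iff_lt_two_of_holderConjugate {p q : ℝ≥0∞} [p.HolderConjugate q] :
    2 < p ↔ q < 2 := by
  have hsum := ENNReal.HolderConjugate.inv_add_inv_eq_one p q
  rw [← ENNReal.inv_two_add_inv_two] at hsum
  rw [← ENNReal.inv_lt_inv, ← ENNReal.inv_lt_inv (b := q)]
  constructor <;> intro h <;> contrapose! hsum
  · exact (ENNReal.add_lt_add_of_lt_of_le (ne_top_of_le_ne_top (by simp) hsum) h hsum).ne
  · exact (ENNReal.add_lt_add_of_le_of_lt (by simp) hsum h).ne'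

variable {p q : ℝ≥0∞}

theorem dbarInv_eq_integral_div (h : ℂ → ℂ) (z : ℂ) :
    dbarInv h z = (Real.pi : ℂ)⁻¹ * ∫ w, h (z - w) / w := by
  rw [dbarInv, ← integral_sub_left_eq_self (fun w => h (z - w) / w) volume z]
  simp only [sub_sub_cancel]

theorem integrable_inv_norm_smul_complex {F : Type*} [NormedAddCommGroup F] [NormedSpace ℝ F]
    (hq1 : 1 ≤ q) (hq2 : q < 2) {g : ℂ → F} (hg : Continuous g) (hgq : MemLp g q) :
    Integrable fun w => ‖w‖⁻¹ • g w := by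
  have := (ENNReal.HolderConjugate.conjExponent hq1).symm
  refine integrable_inv_norm_smul (q' := q.conjExponent) (by simp) ?_ hg hgq
  rw [finrank_real_complex]
  exact_mod_cast two_lt_iff_lt_two_of_holderConjugate.2 hq2

theorem integrable_div_const_sub (hq1 : 1 ≤ q) (hq2 : q < 2) {h : ℂ → ℂ} (hh : Continuous h)
    (hhq : MemLp h q) (z : ℂ) : Integrable fun w => h w / (z - w) := by
  have hkernel := integrable_inv_norm_smul_complex hq1 hq2 (hh.comp (continuous_sub_left z))
    (hhq.comp_measurePreserving (volume.measurePreserving_sub_left z))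
  have hquot : Integrable fun w => h (z - w) / w :=
    hkernel.mono (by fun_prop : Measurable _).aestronglyMeasurable
      (.of_forall fun w => by simp [div_eq_inv_mul])
  simpa using hquot.comp_sub_left z

theorem dbarInv_dbar (hq1 : 1 ≤ q) (hq2 : q < 2) {H : ℂ → ℂ} (hH : ContDiff ℝ 1 H)
    (hHq : MemLp H q) (hDHq : MemLp (fderiv ℝ H) q) : dbarInv (dbar H) = H := by
  ext z
  set Hz : ℂ → ℂ := fun w => H (z - w)
  have hderiv : fderiv ℝ Hz = fun w => -fderiv ℝ H (z - w) :=
    funext fun w => fderiv_comp_const_sub (hH.differentiable one_ne_zero _)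
  have hHz : ContDiff ℝ 1 Hz := by fun_prop
  have hHzq : MemLp Hz q := hHq.comp_measurePreserving (volume.measurePreserving_sub_left z)
  have hDHzq : MemLp (fderiv ℝ Hz) q :=
    hderiv ▸ (hDHq.comp_measurePreserving (volume.measurePreserving_sub_left z)).neg
  have hpompeiu := integral_dbar_div_self hHz
    (integrable_inv_norm_smul_complex hq1 hq2 hHz.continuous hHzq)
    (integrable_inv_norm_smul_complex hq1 hq2 (hHz.continuous_fderiv one_ne_zero) hDHzq)
  simp only [Hz, dbar_comp_const_sub (hH.differentiable one_ne_zero _), neg_div, integral_neg,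
    neg_inj, sub_zero] at hpompeiu
  rw [dbarInv_eq_integral_div, hpompeiu, inv_mul_cancel_left₀ (by simp [Real.pi_ne_zero])]

theorem exists_enorm_dbarInv_le (hq1 : 1 ≤ q) (hq2 : q < 2) (hp : 2 < p) :
    ∃ K : NNReal, ∀ (h : ℂ → ℂ) (z : ℂ), AEStronglyMeasurable h →
      ‖dbarInv h z‖ₑ ≤ K * (eLpNorm h p volume + eLpNorm h q volume) := by
  have := (ENNReal.HolderConjugate.conjExponent hq1).symm
  have := (ENNReal.HolderConjugate.conjExponent (one_le_two.trans hp.le)).symm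
  have hp' : p.conjExponent < Module.finrank ℝ ℂ := by
    rw [finrank_real_complex]
    exact_mod_cast (two_lt_iff_lt_two_of_holderConjugate (p := p)).1 hp
  have hq' : Module.finrank ℝ ℂ < q.conjExponent := by
    rw [finrank_real_complex]
    exact_mod_cast two_lt_iff_lt_two_of_holderConjugate.2 hq2
  obtain ⟨K, hK⟩ := exists_eLpNorm_inv_norm_smul_le (F := ℂ) (μ := volume) (p := p) (q := q)
    hp' hq'
  refine ⟨‖(Real.pi : ℂ)⁻¹‖₊ * K, fun h z hh => ?_⟩
  have hmp := (volume : Measure ℂ).measurePreserving_sub_left z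
  calc ‖dbarInv h z‖ₑ
      = ‖(Real.pi : ℂ)⁻¹‖ₑ * ‖∫ w, h (z - w) / w‖ₑ := by rw [dbarInv_eq_integral_div, enorm_mul]
    _ ≤ ‖(Real.pi : ℂ)⁻¹‖ₑ * ∫⁻ w, ‖h (z - w) / w‖ₑ := by
        gcongr
        exact enorm_integral_le_lintegral_enorm _
    _ = ‖(Real.pi : ℂ)⁻¹‖ₑ * eLpNorm (fun w => ‖w‖⁻¹ • h (z - w)) 1 volume := by
        rw [eLpNorm_one_eq_lintegral_enorm]
        congr 2 with w
        simp [← ofReal_norm, div_eq_inv_mul]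
    _ ≤ ‖(Real.pi : ℂ)⁻¹‖ₑ *
        (K * (eLpNorm (h ∘ (z - ·)) p volume + eLpNorm (h ∘ (z - ·)) q volume)) := by
        gcongr
        exact hK _ (hh.comp_measurePreserving hmp)
    _ = ↑(‖(Real.pi : ℂ)⁻¹‖₊ * K) * (eLpNorm h p volume + eLpNorm h q volume) := by
        rw [eLpNorm_comp_measurePreserving hh hmp, eLpNorm_comp_measurePreserving hh hmp,
          ENNReal.coe_mul, mul_assoc, enorm_eq_nnnorm]

end CauchyTransform

section Ek

theorem ek_eq_exp_inner (k z : ℂ) : ek k z = exp (inner ℝ k z * I) := by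
  have hphase : conj k * z + k * conj z = (2 * inner ℝ k z : ℝ) := by
    simpa [Complex.inner, mul_comm] using add_conj (conj k * z)
  rw [ek, hphase]
  congr 1
  push_cast
  ring

theorem norm_ek (k z : ℂ) : ‖ek k z‖ = 1 := by
  rw [ek_eq_exp_inner, norm_exp_ofReal_mul_I]

theorem contDiff_ek (k : ℂ) {n : WithTop ℕ∞} : ContDiff ℝ n (ek k) := by
  have hphase : ContDiff ℝ n fun z => (inner ℝ k z : ℂ) :=
    (ofRealCLM ∘L innerSL ℝ k).contDiff
  simpa only [← ek_eq_exp_inner] using (hphase.mul (contDiff_const (c := I))).cexp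

theorem hasFDerivAt_ek (k z : ℂ) :
    HasFDerivAt (ek k) ((ek k z * I) • (ofRealCLM ∘L innerSL ℝ k)) z := by
  have hphase : HasFDerivAt (fun z => (inner ℝ k z : ℂ) * I) (I • (ofRealCLM ∘L innerSL ℝ k)) z :=
    (ofRealCLM ∘L innerSL ℝ k).hasFDerivAt.mul_const I
  simpa only [← ek_eq_exp_inner, smul_smul] using hphase.cexp

theorem norm_fderiv_ek_le (k z : ℂ) : ‖fderiv ℝ (ek k) z‖ ≤ ‖k‖ := by
  rw [(hasFDerivAt_ek k z).fderiv, norm_smul, norm_mul, norm_ek, norm_I, one_mul, one_mul]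
  refine (ContinuousLinearMap.opNorm_comp_le _ _).trans ?_
  rw [ofRealCLM_norm, innerSL_apply_norm, one_mul]

theorem dbar_ek (k z : ℂ) : dbar (ek k) z = I * k / 2 * ek k z := by
  rw [dbar, (hasFDerivAt_ek k z).fderiv]
  simp only [smul_apply, ContinuousLinearMap.comp_apply, coe_innerSL_apply, Complex.inner, one_mul,
    conj_re, conj_im, ofRealCLM_apply, smul_eq_mul, mul_re, I_re, I_im, zero_mul, mul_neg,
    sub_neg_eq_add, zero_add]
  linear_combination (I * ek k z / 2) * re_add_im k

variable {p q : ℝ≥0∞}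

theorem memLp_ek_mul (k : ℂ) {f : ℂ → ℂ} (hf : MemLp f q) : MemLp (fun z => ek k z * f z) q :=
  hf.of_le ((contDiff_ek k (n := 1)).continuous.aestronglyMeasurable.mul hf.1)
    (.of_forall fun z => by rw [norm_mul, norm_ek, one_mul])

theorem eLpNorm_ek_mul (k : ℂ) (f : ℂ → ℂ) :
    eLpNorm (fun z => ek k z * f z) q volume = eLpNorm f q volume :=
  eLpNorm_congr_norm_ae (.of_forall fun z => by rw [norm_mul, norm_ek, one_mul])

theorem memLp_fderiv_ek_mul (k : ℂ) {G : ℂ → ℂ} (hG : ContDiff ℝ 1 G) (hGq : MemLp G q)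
    (hDGq : MemLp (fderiv ℝ G) q) : MemLp (fderiv ℝ fun z => ek k z * G z) q := by
  have hcont : Continuous (fderiv ℝ fun z => ek k z * G z) :=
    ((contDiff_ek k).mul hG).continuous_fderiv one_ne_zero
  refine (hDGq.norm.add (hGq.norm.mul_const ‖k‖)).mono' hcont.aestronglyMeasurable
    (.of_forall fun z => ?_)
  rw [fderiv_fun_mul (hasFDerivAt_ek k z).differentiableAt (hG.differentiable one_ne_zero z)]
  calc ‖ek k z • fderiv ℝ G z + G z • fderiv ℝ (ek k) z‖
      ≤ ‖fderiv ℝ G z‖ + ‖G z‖ * ‖fderiv ℝ (ek k) z‖ := by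
        simpa [norm_smul, norm_ek] using
          norm_add_le (ek k z • fderiv ℝ G z) (G z • fderiv ℝ (ek k) z)
    _ ≤ ‖fderiv ℝ G z‖ + ‖G z‖ * ‖k‖ := by
        gcongr
        exact norm_fderiv_ek_le k z

theorem dbarInv_ek_mul (hq1 : 1 ≤ q) (hq2 : q < 2) {k : ℂ} (hk : k ≠ 0) {G : ℂ → ℂ}
    (hG : ContDiff ℝ 1 G) (hGq : MemLp G q) (hDGq : MemLp (fderiv ℝ G) q) (z : ℂ) :
    dbarInv (fun w => ek k w * G w) z =
      2 / (I * k) * (ek k z * G z - dbarInv (fun w => ek k w * dbar G w) z) := by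
  have hek := contDiff_ek k (n := 1)
  have hdbar : dbar (fun w => ek k w * G w) =
      fun w => I * k / 2 * (ek k w * G w) + ek k w * dbar G w := by
    ext w
    rw [dbar_mul (hek.differentiable one_ne_zero w) (hG.differentiable one_ne_zero w), dbar_ek]
    ring
  have hpompeiu := congrFun (dbarInv_dbar hq1 hq2 (hek.mul hG) (memLp_ek_mul k hGq)
    (memLp_fderiv_ek_mul k hG hGq hDGq)) z
  have hint0 : Integrable fun w => ek k w * G w / (z - w) :=
    integrable_div_const_sub hq1 hq2 (hek.continuous.mul hG.continuous)
      (memLp_ek_mul k hGq) z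
  have hint1 : Integrable fun w => ek k w * dbar G w / (z - w) :=
    integrable_div_const_sub hq1 hq2 (hek.continuous.mul (continuous_dbar hG))
      (memLp_ek_mul k (memLp_dbar hG hDGq)) z
  simp only [hdbar, dbarInv, add_div, mul_div_assoc (I * k / 2)] at hpompeiu ⊢
  rw [integral_add (hint0.const_mul _) hint1, integral_const_mul] at hpompeiu
  rw [← hpompeiu]
  field_simp
  ring

theorem exists_enorm_dbarInv_ek_mul_le (hq1 : 1 ≤ q) (hq2 : q < 2) (hp : 2 < p) :
    ∃ K : NNReal, ∀ (G : ℂ → ℂ) (k z : ℂ), k ≠ 0 → ContDiff ℝ 1 G → MemLp G q →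
      MemLp (fderiv ℝ G) q → ‖dbarInv (fun w => ek k w * G w) z‖ₑ ≤ ENNReal.ofReal (2 * ‖k‖⁻¹) *
        (‖G z‖ₑ + K * (eLpNorm (dbar G) p volume + eLpNorm (dbar G) q volume)) := by
  obtain ⟨K, hK⟩ := exists_enorm_dbarInv_le hq1 hq2 hp
  refine ⟨K, fun G k z hk hG hGq hDGq => ?_⟩
  have hmeas : AEStronglyMeasurable fun w => ek k w * dbar G w :=
    ((contDiff_ek k (n := 1)).continuous.mul (continuous_dbar hG)).aestronglyMeasurable
  have hconst : ‖2 / (I * k)‖ₑ = ENNReal.ofReal (2 * ‖k‖⁻¹) := by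
    rw [← ofReal_norm, norm_div, norm_mul, norm_I, one_mul, norm_ofNat, div_eq_mul_inv]
  rw [dbarInv_ek_mul hq1 hq2 hk hG hGq hDGq, enorm_mul, hconst]
  gcongr
  refine enorm_sub_le.trans (add_le_add ?_ ?_)
  · rw [enorm_mul, ← ofReal_norm (ek k z), norm_ek, ENNReal.ofReal_one, one_mul]
  · simpa only [eLpNorm_ek_mul] using hK _ z hmeas

end Ek

theorem stmt6_general {p q : ℝ≥0∞} (hq1 : 1 ≤ q) (hq2 : q < 2) (hp : 2 < p) :
    ∃ C : ℝ, 0 < C ∧ ∀ (G : ℂ → ℂ) (k : ℂ), k ≠ 0 → ContDiff ℝ 1 G → MemLp G q →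
      MemLp (fderiv ℝ G) q →
        eLpNorm (dbarInv fun z => ek (-k) z * G z) ⊤ volume ≤
          ENNReal.ofReal (C * ‖k‖⁻¹) *
            (eLpNorm (dbar G) p volume + eLpNorm (dbar G) q volume + eLpNorm G ⊤ volume) := by
  obtain ⟨K, hK⟩ := exists_enorm_dbarInv_ek_mul_le hq1 hq2 hp
  set M := max K 1
  refine ⟨2 * M, by positivity, fun G k hk hG hGq hDGq => ?_⟩
  set S := eLpNorm (dbar G) p volume + eLpNorm (dbar G) q volume
  set N := eLpNorm G ⊤ volume
  have hN : ∀ᵐ z, ‖G z‖ₑ ≤ N := by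
    simpa only [N, eLpNorm_exponent_top] using ae_le_eLpNormEssSup
  rw [eLpNorm_exponent_top]
  refine eLpNormEssSup_le_of_ae_enorm_bound (hN.mono fun z hz => ?_)
  calc ‖dbarInv (fun z => ek (-k) z * G z) z‖ₑ
      ≤ ENNReal.ofReal (2 * ‖k‖⁻¹) * (‖G z‖ₑ + K * S) := by
        simpa only [norm_neg] using hK G (-k) z (neg_ne_zero.2 hk) hG hGq hDGq
    _ ≤ ENNReal.ofReal (2 * ‖k‖⁻¹) * (M * N + M * S) := by
        gcongr
        · exact hz.trans (le_mul_of_one_le_left' (by exact_mod_cast le_max_right K 1))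
        · exact le_max_left K 1
    _ = ENNReal.ofReal (2 * M * ‖k‖⁻¹) * (S + N) := by
        rw [mul_right_comm, ENNReal.ofReal_mul (p := 2 * ‖k‖⁻¹) (by positivity),
          ENNReal.ofReal_coe_nnreal]
        ring

/-- Estimate \eqref{fr}:
`‖∂̄⁻¹[e_{-k}G]‖_∞ ≤ C|k|⁻¹(‖∂̄G‖_p + ‖∂̄G‖_{p'} + ‖G‖_∞)`. -/
theorem stmt6 (p : ℝ) (hp : 2 < p) :
    ∃ C : ℝ, 0 < C ∧ ∀ (G : 𝓢(ℂ, ℂ)) (k : ℂ), k ≠ 0 →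
      eLpNorm (dbarInv fun z => ek (-k) z * G z) ⊤ volume ≤
        ENNReal.ofReal (C * ‖k‖⁻¹) *
          (eLpNorm (dbar (⇑G)) (ENNReal.ofReal p) volume +
            eLpNorm (dbar (⇑G)) (ENNReal.ofReal (p / (p - 1))) volume +
            eLpNorm (⇑G) ⊤ volume) := by
  have hp0 : 0 < p - 1 := by linarith
  obtain ⟨C, hC, hbound⟩ := stmt6_general (p := ENNReal.ofReal p)
    (q := ENNReal.ofReal (p / (p - 1)))
    (by rw [ENNReal.one_le_ofReal, one_le_div₀ hp0]; linarith)
    (by rw [ENNReal.ofReal_lt_ofNat, div_lt_iff₀ hp0]; linarith)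
    (ENNReal.ofNat_lt_ofReal.2 hp)
  exact ⟨C, hC, fun G k hk => hbound G k hk (G.smooth 1) (G.memLp _ _)
    ((SchwartzMap.fderivCLM ℝ ℂ ℂ G).memLp _ _)⟩
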